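/- Let γ ∈ (0,π/2]. Then lim_{τ→+∞} inf_{ξ∈ℝ} ( μ₁(ξ·cos γ + τ·sin γ) + (ξ·sin γ − τ·cos γ)² ) = 1. (By the Persson characterization, the quantity under the limit equals the bottom s_ess(B;α,τ) of the essential spectrum of the Neumann realization on the sector for the field B = (sin γ·cos(α/2), sin γ·sin(α/2), cos γ); hence lim_{τ→+∞} s_ess(B;α,τ) = 1.) -/

import Mathlib

open Real MeasureTheory Set Filter

noncomputable section

namespace MagWedge

/-- The infinite sector `S_α := {(x₁,x₂) : |x₂| ≤ x₁·tan(α/2)}`. -/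
def sector (α : ℝ) : Set (ℝ × ℝ) :=
  {x | |x.2| ≤ x.1 * Real.tan (α / 2)}

/-- The infinite wedge `W_α := S_α × ℝ` (coordinates `(x₁, x₂, x₃)`). -/
def wedge (α : ℝ) : Set (ℝ × ℝ × ℝ) :=
  {x | |x.2.1| ≤ x.1 * Real.tan (α / 2)}

/-- The upper half-plane `Hp^up := {x₂ < x₁·tan(α/2)}`. -/
def hpUp (α : ℝ) : Set (ℝ × ℝ) :=
  {x | x.2 < x.1 * Real.tan (α / 2)}

/-- The lower half-plane `Hp^low := {x₂ > −x₁·tan(α/2)}`. -/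
def hpLow (α : ℝ) : Set (ℝ × ℝ) :=
  {x | -(x.1 * Real.tan (α / 2)) < x.2}

/-- The magnetic/electric energy of `u` on a planar domain `Ω`, for magnetic field
`(b₁,b₂,b₃)` (gauge `A̲ = (−x₂ b₃, 0)`) and Fourier parameter `τ`. -/
def energy2D (Ω : Set (ℝ × ℝ)) (b1 b2 b3 τ : ℝ) (u : ℝ × ℝ → ℂ) : ℝ :=
  ∫ x in Ω,
    ‖(-Complex.I) * fderiv ℝ u x (1, 0) + ((x.2 * b3 : ℝ) : ℂ) * u x‖ ^ 2
      + ‖fderiv ℝ u x (0, 1)‖ ^ 2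
      + (x.1 * b2 - x.2 * b1 - τ) ^ 2 * ‖u x‖ ^ 2

/-- The squared `L²`-norm of `u` on a planar domain `Ω`. -/
def norm2D (Ω : Set (ℝ × ℝ)) (u : ℝ × ℝ → ℂ) : ℝ := ∫ x in Ω, ‖u x‖ ^ 2

/-- The bottom of the spectrum of the Neumann realization of
`(−i∇−A̲)² + (x₁b₂−x₂b₁−τ)²` on `Ω`, via the Rayleigh quotient. -/
def specInf2D (Ω : Set (ℝ × ℝ)) (b1 b2 b3 τ : ℝ) : ℝ :=
  sInf { r : ℝ | ∃ u : ℝ × ℝ → ℂ, ContDiff ℝ (⊤ : ℕ∞) u ∧ HasCompactSupport u ∧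
    0 < norm2D Ω u ∧ r = energy2D Ω b1 b2 b3 τ u / norm2D Ω u }

/-- The band function `s(B;α,τ)` on the sector `S_α`. -/
def bandFn (α b1 b2 b3 τ : ℝ) : ℝ := specInf2D (sector α) b1 b2 b3 τ

/-- `Σ(B;α,τ,R)` : the Rayleigh quotient infimum over functions supported outside the
(closed Euclidean) ball of radius `R` centered at the origin. -/
def SigmaR (α b1 b2 b3 τ R : ℝ) : ℝ :=
  sInf { r : ℝ | ∃ u : ℝ × ℝ → ℂ, ContDiff ℝ (⊤ : ℕ∞) u ∧ HasCompactSupport u ∧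
    (tsupport u ⊆ {x : ℝ × ℝ | R ^ 2 < x.1 ^ 2 + x.2 ^ 2}) ∧
    0 < norm2D (sector α) u ∧
    r = energy2D (sector α) b1 b2 b3 τ u / norm2D (sector α) u }

/-- The bottom of the essential spectrum via Persson's characterization:
`s_ess(B;α,τ) = sup_{R>0} Σ(B;α,τ,R)`. -/
def sEss (α b1 b2 b3 τ : ℝ) : ℝ :=
  sSup { r : ℝ | ∃ R > (0 : ℝ), r = SigmaR α b1 b2 b3 τ R }

/-- The 3D magnetic energy on a domain `Ω ⊆ ℝ³` for the constant field `(b₁,b₂,b₃)`,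
in the gauge `A = (−x₂b₃, 0, x₂b₁ − x₁b₂)`. -/
def energy3D (Ω : Set (ℝ × ℝ × ℝ)) (b1 b2 b3 : ℝ) (u : ℝ × ℝ × ℝ → ℂ) : ℝ :=
  ∫ x in Ω,
    ‖(-Complex.I) * fderiv ℝ u x (1, 0, 0) + ((x.2.1 * b3 : ℝ) : ℂ) * u x‖ ^ 2
      + ‖fderiv ℝ u x (0, 1, 0)‖ ^ 2
      + ‖(-Complex.I) * fderiv ℝ u x (0, 0, 1) - ((x.2.1 * b1 : ℝ) : ℂ) * u x
          + ((x.1 * b2 : ℝ) : ℂ) * u x‖ ^ 2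

/-- The squared `L²`-norm of `u` on a domain `Ω ⊆ ℝ³`. -/
def norm3D (Ω : Set (ℝ × ℝ × ℝ)) (u : ℝ × ℝ × ℝ → ℂ) : ℝ := ∫ x in Ω, ‖u x‖ ^ 2

/-- `λ(B;W_α)` : the bottom of the spectrum of the Neumann magnetic Laplacian on the
wedge `W_α` with constant magnetic field `B = (b₁,b₂,b₃)`. -/
def lambdaWedge (α b1 b2 b3 : ℝ) : ℝ :=
  sInf { r : ℝ | ∃ u : ℝ × ℝ × ℝ → ℂ, ContDiff ℝ (⊤ : ℕ∞) u ∧ HasCompactSupport u ∧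
    0 < norm3D (wedge α) u ∧ r = energy3D (wedge α) b1 b2 b3 u / norm3D (wedge α) u }

/-- The de Gennes function `μ₁(ξ)`: bottom of the spectrum of the Neumann realization of
`−d²/dt² + (t−ξ)²` on the half-line. -/
def deGennes (ξ : ℝ) : ℝ :=
  sInf { r : ℝ | ∃ u : ℝ → ℂ, ContDiff ℝ (⊤ : ℕ∞) u ∧ HasCompactSupport u ∧
    (0 < ∫ t in Ioi (0 : ℝ), ‖u t‖ ^ 2) ∧
    r = (∫ t in Ioi (0 : ℝ), ‖deriv u t‖ ^ 2 + (t - ξ) ^ 2 * ‖u t‖ ^ 2) /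
        (∫ t in Ioi (0 : ℝ), ‖u t‖ ^ 2) }

/-- `Θ₀ := inf_ξ μ₁(ξ)`. -/
def Theta0 : ℝ := ⨅ ξ : ℝ, deGennes ξ

/-- The half-space `{(s,t,z) : t > 0}` in ℝ³. -/
def halfSpace3 : Set (ℝ × ℝ × ℝ) := {x | 0 < x.2.1}

/-- `σ(θ)` : the bottom of the spectrum of the Neumann magnetic Laplacian on the half-space
with a unit magnetic field making angle `θ` with the boundary. -/
def sigmaHS (θ : ℝ) : ℝ :=
  sInf { r : ℝ | ∃ u : ℝ × ℝ × ℝ → ℂ, ContDiff ℝ (⊤ : ℕ∞) u ∧ HasCompactSupport u ∧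
    (0 < ∫ x in halfSpace3, ‖u x‖ ^ 2) ∧
    r = (∫ x in halfSpace3,
          ‖fderiv ℝ u x (1, 0, 0)‖ ^ 2 + ‖fderiv ℝ u x (0, 1, 0)‖ ^ 2
            + ‖(-Complex.I) * fderiv ℝ u x (0, 0, 1)
                - ((x.2.1 * Real.cos θ : ℝ) : ℂ) * u x
                + ((x.1 * Real.sin θ : ℝ) : ℂ) * u x‖ ^ 2) /
        (∫ x in halfSpace3, ‖u x‖ ^ 2) }

/-- `μ(α)` : the bottom of the spectrum of the magnetic Neumann Laplacian on the sector
`S_α` with unit constant (scalar) magnetic field. -/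
def muSector (α : ℝ) : ℝ :=
  sInf { r : ℝ | ∃ u : ℝ × ℝ → ℂ, ContDiff ℝ (⊤ : ℕ∞) u ∧ HasCompactSupport u ∧
    0 < norm2D (sector α) u ∧
    r = (∫ x in sector α,
          ‖(-Complex.I) * fderiv ℝ u x (1, 0) + (x.2 : ℂ) * u x‖ ^ 2
            + ‖fderiv ℝ u x (0, 1)‖ ^ 2) / norm2D (sector α) u }

end MagWedge

namespace MagWedge

lemma hasDerivAt_maxsq (x : ℝ) : HasDerivAt (fun y : ℝ => (max y 0) ^ 2) (2 * max x 0) x := by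
  rcases lt_trichotomy x 0 with h | h | h
  · rw [max_eq_right h.le, mul_zero]
    refine (hasDerivAt_const x (0 : ℝ)).congr_of_eventuallyEq ?_
    filter_upwards [Iio_mem_nhds h] with y hy
    rw [max_eq_right (le_of_lt hy)]; norm_num
  · subst h
    rw [max_self, mul_zero]
    rw [hasDerivAt_iff_isLittleO]
    have h1 : (fun x' : ℝ => (max x' 0) ^ 2 - (max (0 : ℝ) 0) ^ 2 - (x' - 0) • (0 : ℝ))
        =O[nhds 0] (fun x' : ℝ => x' ^ 2) := by
      refine Asymptotics.IsBigO.of_bound 1 (Filter.Eventually.of_forall fun y => ?_)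
      simp only [max_self, smul_zero, sub_zero, one_mul, Real.norm_eq_abs]
      rcases le_total y 0 with hy | hy
      · rw [max_eq_right hy]; simp; positivity
      · rw [max_eq_left hy]; simp
    refine h1.trans_isLittleO ?_
    simpa using (Asymptotics.isLittleO_pow_id (𝕜 := ℝ) (n := 2) (by norm_num))
  · rw [max_eq_left h.le]
    have h2 : HasDerivAt (fun y : ℝ => y ^ 2) (2 * x) x := by
      simpa using hasDerivAt_pow 2 x
    refine h2.congr_of_eventuallyEq ?_
    filter_upwards [Ioi_mem_nhds h] with y hy
    rw [max_eq_left (le_of_lt hy)]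

lemma phi_ineq (ε ξ r : ℝ) (hε : 0 < ε) (hξ : 0 < ξ) (h2 : 2 ≤ ε * ξ) (hr : r ≤ ξ) :
    (r - (max r 0) ^ 2 / ξ) ^ 2 + (-1 + 2 * max r 0 / ξ) ≤ r ^ 2 - 1 + ε := by
  rcases le_total r 0 with h | h
  · rw [max_eq_right h]; simp; linarith
  · rw [max_eq_left h]
    obtain ⟨q, rfl⟩ : ∃ q, r = q * ξ := ⟨r / ξ, by field_simp⟩
    have hq : 0 ≤ q := by
      by_contra hc
      push Not at hc
      nlinarith
    have hq1 : q ≤ 1 := by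
      by_contra hc
      push Not at hc
      nlinarith
    have e1 : (q * ξ) ^ 2 / ξ = q ^ 2 * ξ := by field_simp
    have e2 : 2 * (q * ξ) / ξ = 2 * q := by field_simp
    rw [e1, e2]
    have hε' : 2 / ξ ≤ ε := by rw [div_le_iff₀ hξ]; exact h2
    have key : 2 * q - q ^ 3 * ξ ^ 2 ≤ 2 / ξ := by
      rw [le_div_iff₀ hξ]
      have hp : 0 ≤ q * ξ := by positivity
      nlinarith [mul_nonneg hp (sq_nonneg (q * ξ - 1)), sq_nonneg (q * ξ - 1)]
    have h3 : q ^ 4 * ξ ^ 2 ≤ q ^ 3 * ξ ^ 2 := by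
      have : q ^ 4 ≤ q ^ 3 := by nlinarith [pow_nonneg hq 3]
      exact mul_le_mul_of_nonneg_right this (by positivity)
    nlinarith

lemma deGennes_nonneg (ξ : ℝ) : 0 ≤ deGennes ξ := by
  refine Real.sInf_nonneg ?_
  rintro r ⟨u, -, -, -, rfl⟩
  refine div_nonneg (integral_nonneg fun t => ?_) (integral_nonneg fun t => ?_) <;> positivity

lemma energy_lower (ε ξ : ℝ) (hε : 0 < ε) (hξ : 0 < ξ) (h2 : 2 ≤ ε * ξ) (u : ℝ → ℂ)
    (hu : ContDiff ℝ (⊤ : ℕ∞) u) (hc : HasCompactSupport u) :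
    (1 - ε) * (∫ t in Ioi (0 : ℝ), ‖u t‖ ^ 2) ≤
      ∫ t in Ioi (0 : ℝ), ‖deriv u t‖ ^ 2 + (t - ξ) ^ 2 * ‖u t‖ ^ 2 := by
  have hu0 : Continuous u := hu.continuous
  have hu1 : Continuous (deriv u) := hu.continuous_deriv (by simp)
  have hd : ∀ t, HasDerivAt u (deriv u t) t := fun t =>
    ((hu.differentiable (by simp)) t).hasDerivAt
  have hcd : HasCompactSupport (deriv u) := hc.deriv
  set φ : ℝ → ℝ := fun t => (ξ - t) - (max (ξ - t) 0) ^ 2 / ξ with hφ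
  set ψ : ℝ → ℝ := fun t => -1 + 2 * max (ξ - t) 0 / ξ with hψ
  have hφd : ∀ t, HasDerivAt φ (ψ t) t := by
    intro t
    have a : HasDerivAt (fun t : ℝ => ξ - t) (-1) t := by
      simpa using (hasDerivAt_id t).const_sub ξ
    have b := (hasDerivAt_maxsq (ξ - t)).comp t a
    have := a.sub (b.div_const ξ)
    refine this.congr_deriv ?_
    simp only [hψ]; ring
  have hφc : Continuous φ := by fun_prop
  have hψc : Continuous ψ := by fun_prop
  set F : ℝ → ℝ := fun t => φ t * ‖u t‖ ^ 2 with hF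
  set F' : ℝ → ℝ := fun t => ψ t * ‖u t‖ ^ 2 + φ t * (2 * inner ℝ (u t) (deriv u t)) with hF'
  have hFd : ∀ t, HasDerivAt F (F' t) t := fun t => (hφd t).mul (hd t).norm_sq
  have hz : ∀ t, t ∉ tsupport u → u t = 0 := fun t ht => image_eq_zero_of_notMem_tsupport ht
  have hFs : HasCompactSupport F := by
    refine HasCompactSupport.intro hc fun t ht => ?_
    simp [hF, hz t ht]
  have hF's : HasCompactSupport F' := by
    refine HasCompactSupport.intro hc fun t ht => ?_
    simp [hF', hz t ht]
  have hF'c : Continuous F' := by fun_prop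
  have hF'i : Integrable F' := hF'c.integrable_of_hasCompactSupport hF's
  have hFint : ∫ t in Ioi (0 : ℝ), F' t = 0 - F 0 := by
    refine integral_Ioi_of_hasDerivAt_of_tendsto' (fun t _ => hFd t) hF'i.integrableOn ?_
    exact (hFs.is_zero_at_infty).mono_left atTop_le_cocompact
  have hF0 : F 0 = 0 := by
    have : max ξ 0 = ξ := max_eq_left hξ.le
    simp only [hF, hφ, sub_zero, this]
    field_simp
    ring
  have hi1 : Integrable (fun t => ‖u t‖ ^ 2) := by
    refine Continuous.integrable_of_hasCompactSupport (by fun_prop) ?_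
    refine HasCompactSupport.intro hc fun t ht => ?_
    simp [hz t ht]
  have hi2 : Integrable (fun t => ‖deriv u t‖ ^ 2 + (t - ξ) ^ 2 * ‖u t‖ ^ 2) := by
    refine Continuous.integrable_of_hasCompactSupport (by fun_prop) ?_
    refine HasCompactSupport.intro hc fun t ht => ?_
    have : deriv u t = 0 := by
      by_contra h
      exact ht (support_deriv_subset h)
    simp [hz t ht, this]
  have hmono : ∫ t in Ioi (0 : ℝ), ((1 - ε) * ‖u t‖ ^ 2 + F' t) ≤
      ∫ t in Ioi (0 : ℝ), ‖deriv u t‖ ^ 2 + (t - ξ) ^ 2 * ‖u t‖ ^ 2 := by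
    refine setIntegral_mono_on ((hi1.const_mul _).add hF'i).integrableOn hi2.integrableOn
      measurableSet_Ioi fun t ht => ?_
    have ht' : ξ - t ≤ ξ := by
      have : (0 : ℝ) < t := ht
      linarith
    have k := phi_ineq ε ξ (ξ - t) hε hξ h2 ht'
    have hsq : 0 ≤ ‖deriv u t - φ t • u t‖ ^ 2 := by positivity
    rw [norm_sub_sq_real, inner_smul_right, norm_smul, mul_pow, Real.norm_eq_abs, sq_abs,
      real_inner_comm] at hsq
    have k2 : (φ t ^ 2 + ψ t) * ‖u t‖ ^ 2 ≤ ((ξ - t) ^ 2 - 1 + ε) * ‖u t‖ ^ 2 :=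
      mul_le_mul_of_nonneg_right k (by positivity)
    simp only [hF']
    nlinarith
  rw [integral_add (hi1.const_mul _).integrableOn hF'i.integrableOn, integral_const_mul, hFint,
    hF0] at hmono
  linarith

/-- A compactly supported almost-ground state of the harmonic oscillator. -/
lemma exists_test (ε : ℝ) (hε : 0 < ε) : ∃ (v : ℝ → ℝ) (M : ℝ), ContDiff ℝ (⊤ : ℕ∞) v ∧
    HasCompactSupport v ∧ (∀ s, s ≤ -M → v s = 0 ∧ deriv v s = 0) ∧ 0 < ∫ s, v s ^ 2 ∧
    ∫ s, (deriv v s ^ 2 + s ^ 2 * v s ^ 2) ≤ (1 + ε) * ∫ s, v s ^ 2 := by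
  let b : ContDiffBump (0 : ℝ) := ⟨1, 2, by norm_num, by norm_num⟩
  have hb : ContDiff ℝ (⊤ : ℕ∞) (b : ℝ → ℝ) := b.contDiff
  have hbc : HasCompactSupport (b : ℝ → ℝ) := b.hasCompactSupport
  have hb1 : Continuous (deriv (b : ℝ → ℝ)) := hb.continuous_deriv (by simp)
  obtain ⟨C, hC⟩ := hb1.bounded_above_of_compact_support hbc.deriv
  have hC0 : 0 ≤ C := (norm_nonneg _).trans (hC 0)
  set g : ℝ → ℝ := fun s => Real.exp (-s ^ 2 / 2) with hg
  have hgs : ContDiff ℝ (⊤ : ℕ∞) g := by fun_prop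
  have hgc : Continuous g := hgs.continuous
  have hgi : Integrable (fun s => g s ^ 2) := by
    refine (integrable_exp_neg_mul_sq (b := 1) one_pos).congr (Filter.Eventually.of_forall ?_)
    intro s
    simp only [hg, ← Real.exp_nat_mul]
    congr 1
    push_cast; ring
  set G := ∫ s, g s ^ 2 with hG
  set m := ∫ s in Icc (-1 : ℝ) 1, g s ^ 2 with hm
  have hmpos : 0 < m := by
    rw [hm, setIntegral_pos_iff_support_of_nonneg_ae (Filter.Eventually.of_forall fun s => by positivity)
      hgi.integrableOn]
    have : Function.support (fun s => g s ^ 2) = univ := by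
      ext s; simp [hg, Real.exp_ne_zero]
    rw [this, univ_inter, Real.volume_Icc]; norm_num
  have hG0 : 0 ≤ G := integral_nonneg fun s => by positivity
  obtain ⟨R, hR1, hR⟩ : ∃ R : ℝ, 1 ≤ R ∧ C ^ 2 * G / R ^ 2 ≤ ε * m := by
    refine ⟨1 + C ^ 2 * G / (ε * m), ?_, ?_⟩
    · have : 0 ≤ C ^ 2 * G / (ε * m) := by positivity
      linarith
    · set X := C ^ 2 * G / (ε * m) with hX
      have hX0 : 0 ≤ X := by positivity
      have : C ^ 2 * G = X * (ε * m) := by rw [hX]; field_simp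
      rw [this, div_le_iff₀ (by positivity)]
      have : 0 < ε * m := by positivity
      nlinarith [mul_nonneg hX0 this.le, mul_nonneg (mul_nonneg hX0 hX0) this.le]
  have hR0 : 0 < R := by linarith
  set χ : ℝ → ℝ := fun s => b (s / R) with hχ
  set χ' : ℝ → ℝ := fun s => deriv b (s / R) / R with hχ'
  have hχs : ContDiff ℝ (⊤ : ℕ∞) χ := hb.comp (contDiff_id.div_const R)
  have hχd : ∀ s, HasDerivAt χ (χ' s) s := by
    intro s
    have h1 : HasDerivAt (b : ℝ → ℝ) (deriv b (s / R)) (s / R) :=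
      ((hb.differentiable (by simp)) _).hasDerivAt
    have h2 : HasDerivAt (fun s : ℝ => s / R) (1 / R) s := (hasDerivAt_id s).div_const R
    exact (h1.comp s h2).congr_deriv (by show _ = deriv b (s / R) / R; ring)
  have hχc : Continuous χ := hχs.continuous
  have hχ'c : Continuous χ' := by
    exact (hb1.comp (continuous_id.div_const R)).div_const R
  have hχz : ∀ s, 2 * R ≤ |s| → χ s = 0 := by
    intro s hs
    refine b.zero_of_le_dist ?_
    rw [dist_zero_right, Real.norm_eq_abs, abs_div, abs_of_pos hR0, le_div_iff₀ hR0]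
    exact hs
  have hχn : ∀ s, 0 ≤ χ s := fun s => b.nonneg
  have hχ1 : ∀ s ∈ Icc (-1 : ℝ) 1, χ s = 1 := by
    intro s hs
    refine b.one_of_mem_closedBall ?_
    rw [mem_closedBall_zero_iff, Real.norm_eq_abs, abs_div, abs_of_pos hR0, div_le_iff₀ hR0]
    have : |s| ≤ 1 := abs_le.2 hs
    show |s| ≤ 1 * R
    linarith
  have hχ'z : ∀ s, 2 * R ≤ |s| → χ' s = 0 := by
    intro s hs
    have hmin : IsLocalMin χ s := by
      refine Filter.Eventually.of_forall fun y => ?_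
      rw [hχz s hs]; exact hχn y
    exact hmin.hasDerivAt_eq_zero (hχd s)
  have hgd : ∀ s, HasDerivAt g (-s * g s) s := by
    intro s
    have h1 : HasDerivAt (fun s : ℝ => -s ^ 2 / 2) (-s) s := by
      have := ((hasDerivAt_pow 2 s).neg).div_const 2
      exact this.congr_deriv (by norm_num; ring)
    exact h1.exp.congr_deriv (by simp only [hg]; ring)
  set v : ℝ → ℝ := fun s => χ s * g s with hv
  have hvd : ∀ s, HasDerivAt v (χ' s * g s + χ s * (-s * g s)) s := fun s => (hχd s).mul (hgd s)
  have hcs : ∀ f : ℝ → ℝ, (∀ s, 2 * R ≤ |s| → f s = 0) → HasCompactSupport f := by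
    intro f hf
    refine HasCompactSupport.intro (K := Icc (-(2 * R)) (2 * R)) isCompact_Icc fun s hs => hf s ?_
    by_contra h
    push Not at h
    exact hs (abs_le.1 h.le)
  have hvc : Continuous v := by fun_prop
  have hv2i : Integrable (fun s => v s ^ 2) :=
    Continuous.integrable_of_hasCompactSupport (by fun_prop)
      (hcs _ fun s hs => by simp [hv, hχz s hs])
  have hmN : m ≤ ∫ s, v s ^ 2 := by
    calc m = ∫ s in Icc (-1 : ℝ) 1, v s ^ 2 := by
          refine setIntegral_congr_fun measurableSet_Icc fun s hs => ?_
          simp [hv, hχ1 s hs]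
      _ ≤ ∫ s, v s ^ 2 :=
          setIntegral_le_integral hv2i (Filter.Eventually.of_forall fun s => by positivity)
  set P : ℝ → ℝ := fun s => s * v s ^ 2 with hP
  set P' : ℝ → ℝ := fun s => 1 * v s ^ 2 +
    s * ((2 : ℕ) * v s ^ (2 - 1) * (χ' s * g s + χ s * (-s * g s))) with hP'
  have hPd : ∀ s, HasDerivAt P (P' s) s := fun s => (hasDerivAt_id s).mul ((hvd s).pow 2)
  have hP'c : Continuous P' := by fun_prop
  have hPs : HasCompactSupport P := hcs _ fun s hs => by simp [hP, hv, hχz s hs]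
  have hP's : HasCompactSupport P' := hcs _ fun s hs => by simp [hP', hv, hχz s hs]
  have hPi : Integrable P' := hP'c.integrable_of_hasCompactSupport hP's
  have hPint : ∫ s, P' s = 0 := by
    refine integral_eq_zero_of_hasDerivAt_of_integrable hPd hPi ?_
    exact Continuous.integrable_of_hasCompactSupport (by fun_prop) hPs
  have hQi : Integrable (fun s => χ' s ^ 2 * g s ^ 2) :=
    Continuous.integrable_of_hasCompactSupport (by fun_prop)
      (hcs _ fun s hs => by simp [hχ'z s hs])
  have hQ : ∫ s, χ' s ^ 2 * g s ^ 2 ≤ C ^ 2 * G / R ^ 2 := by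
    calc ∫ s, χ' s ^ 2 * g s ^ 2 ≤ ∫ s, (C ^ 2 / R ^ 2) * g s ^ 2 := by
          refine integral_mono hQi (hgi.const_mul _) fun s => ?_
          refine mul_le_mul_of_nonneg_right ?_ (by positivity)
          simp only [hχ', div_pow]
          refine div_le_div_of_nonneg_right ?_ (by positivity)
          have := hC (s / R)
          rw [← sq_abs]
          exact pow_le_pow_left₀ (abs_nonneg _) this 2
      _ = C ^ 2 * G / R ^ 2 := by rw [integral_const_mul]; ring
  refine ⟨v, 2 * R, hχs.mul hgs, hcs _ fun s hs => by simp [hv, hχz s hs], ?_, by linarith, ?_⟩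
  · intro s hs
    have hs' : 2 * R ≤ |s| := by
      have := neg_le_abs s
      linarith
    refine ⟨by simp [hv, hχz s hs'], ?_⟩
    rw [(hvd s).deriv, hχz s hs', hχ'z s hs']; ring
  · have e : (fun s => deriv v s ^ 2 + s ^ 2 * v s ^ 2) =
        fun s => (χ' s ^ 2 * g s ^ 2 + v s ^ 2) - P' s := by
      funext s
      rw [(hvd s).deriv]
      simp only [hP', hv]
      norm_num
      ring
    have hQv : Integrable (fun s => χ' s ^ 2 * g s ^ 2 + v s ^ 2) := hQi.add hv2i
    rw [e, integral_sub hQv hPi, integral_add hQi hv2i, hPint]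
    nlinarith

lemma deGennes_mem (ε : ℝ) (hε : 0 < ε) : ∃ M : ℝ, ∀ ξ, M ≤ ξ → ∃ r ≤ 1 + ε,
    r ∈ { r : ℝ | ∃ u : ℝ → ℂ, ContDiff ℝ (⊤ : ℕ∞) u ∧ HasCompactSupport u ∧
    (0 < ∫ t in Ioi (0 : ℝ), ‖u t‖ ^ 2) ∧
    r = (∫ t in Ioi (0 : ℝ), ‖deriv u t‖ ^ 2 + (t - ξ) ^ 2 * ‖u t‖ ^ 2) /
        (∫ t in Ioi (0 : ℝ), ‖u t‖ ^ 2) } := by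
  obtain ⟨v, M, hv, hvc, hvz, hN, hE⟩ := exists_test ε hε
  refine ⟨M, fun ξ hξ => ?_⟩
  set u : ℝ → ℂ := fun t => ((v (t - ξ) : ℝ) : ℂ) with hu
  have hus : ContDiff ℝ (⊤ : ℕ∞) u :=
    Complex.ofRealCLM.contDiff.comp (hv.comp (contDiff_id.sub contDiff_const))
  have huc : HasCompactSupport u := by
    have h1 : HasCompactSupport (fun t => v (t - ξ)) := by
      simpa [sub_eq_add_neg, Function.comp_def] using hvc.comp_homeomorph (Homeomorph.addRight (-ξ))
    exact h1.comp_left (g := fun x : ℝ => (x : ℂ)) (by simp)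
  have hud : ∀ t, deriv u t = ((deriv v (t - ξ) : ℝ) : ℂ) := by
    intro t
    have h1 : HasDerivAt v (deriv v (t - ξ)) (t - ξ) :=
      ((hv.differentiable (by simp)) _).hasDerivAt
    have h2 := h1.comp_sub_const t ξ
    exact h2.ofReal_comp.deriv
  have hz : ∀ t, t ∉ Ioi (0 : ℝ) → v (t - ξ) = 0 ∧ deriv v (t - ξ) = 0 := by
    intro t ht
    refine hvz _ ?_
    have : t ≤ 0 := not_lt.1 ht
    linarith
  have n1 : ∫ t in Ioi (0 : ℝ), ‖u t‖ ^ 2 = ∫ s, v s ^ 2 := by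
    rw [setIntegral_eq_integral_of_forall_compl_eq_zero]
    · rw [← integral_sub_right_eq_self (fun s => v s ^ 2) ξ]
      simp [hu]
    · intro t ht
      simp [hu, (hz t ht).1]
  have n2 : ∫ t in Ioi (0 : ℝ), ‖deriv u t‖ ^ 2 + (t - ξ) ^ 2 * ‖u t‖ ^ 2 =
      ∫ s, (deriv v s ^ 2 + s ^ 2 * v s ^ 2) := by
    rw [setIntegral_eq_integral_of_forall_compl_eq_zero]
    · rw [← integral_sub_right_eq_self (fun s => deriv v s ^ 2 + s ^ 2 * v s ^ 2) ξ]
      simp_rw [hud]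
      simp [hu]
    · intro t ht
      rw [hud, (hz t ht).2]
      simp [hu, (hz t ht).1]
  refine ⟨_, ?_, u, hus, huc, by rw [n1]; exact hN, rfl⟩
  rw [n1, n2, div_le_iff₀ hN]
  exact hE

lemma deGennes_bounds (ε : ℝ) (hε : 0 < ε) : ∃ M : ℝ, ∀ ξ, M ≤ ξ →
    1 - ε ≤ deGennes ξ ∧ deGennes ξ ≤ 1 + ε := by
  obtain ⟨M, hM⟩ := deGennes_mem ε hε
  refine ⟨max M (2 / ε), fun ξ hξ => ?_⟩
  obtain ⟨r, hr, hmem⟩ := hM ξ ((le_max_left _ _).trans hξ)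
  have h2 : 2 / ε ≤ ξ := (le_max_right _ _).trans hξ
  have hξ0 : 0 < ξ := lt_of_lt_of_le (by positivity) h2
  rw [div_le_iff₀ hε] at h2
  constructor
  · refine le_csInf ⟨r, hmem⟩ ?_
    rintro _ ⟨u, hu, hc, hp, rfl⟩
    rw [le_div_iff₀ hp]
    exact energy_lower ε ξ hε hξ0 (by linarith) u hu hc
  · refine (csInf_le ⟨0, ?_⟩ hmem).trans hr
    rintro _ ⟨u, -, -, -, rfl⟩
    refine div_nonneg (integral_nonneg fun t => ?_) (integral_nonneg fun t => ?_) <;> positivity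

end MagWedge

open MagWedge in
/-- `lim_{τ→+∞} s_ess(B;α,τ) = 1` (Persson characterization form). -/
theorem sEss_tendsto_one (γ : ℝ) (hγ : γ ∈ Set.Ioc 0 (π / 2)) :
    Filter.Tendsto
      (fun τ : ℝ => ⨅ ξ : ℝ, (deGennes (ξ * Real.cos γ + τ * Real.sin γ)
          + (ξ * Real.sin γ - τ * Real.cos γ) ^ 2))
      Filter.atTop (nhds 1) := by
  have hs : 0 < Real.sin γ := Real.sin_pos_of_pos_of_lt_pi hγ.1 (by linarith [hγ.2, Real.pi_pos])
  have hc : 0 ≤ Real.cos γ := Real.cos_nonneg_of_mem_Icc ⟨by linarith [hγ.1, Real.pi_pos], hγ.2⟩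
  have hsc := Real.sin_sq_add_cos_sq γ
  rw [Metric.tendsto_atTop]
  intro ε hε
  obtain ⟨M, hM⟩ := deGennes_bounds (ε / 2) (by linarith)
  refine ⟨M * Real.sin γ + Real.cos γ, fun τ hτ => ?_⟩
  set s := Real.sin γ
  set c := Real.cos γ
  have hlow : 1 - ε / 2 ≤ ⨅ ξ : ℝ, (deGennes (ξ * c + τ * s) + (ξ * s - τ * c) ^ 2) := by
    refine le_ciInf fun ξ => ?_
    have h0 := deGennes_nonneg (ξ * c + τ * s)
    by_cases h : 1 ≤ (ξ * s - τ * c) ^ 2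
    · linarith
    · push Not at h
      have h1 : -1 < ξ * s - τ * c := by nlinarith
      have hMx : M ≤ ξ * c + τ * s := by
        have : M * s ≤ (ξ * c + τ * s) * s := by
          have : (ξ * c + τ * s) * s = (ξ * s - τ * c) * c + τ := by
            linear_combination τ * hsc
          nlinarith
        exact le_of_mul_le_mul_right this hs
      have := (hM _ hMx).1
      nlinarith [sq_nonneg (ξ * s - τ * c)]
  have hup : ⨅ ξ : ℝ, (deGennes (ξ * c + τ * s) + (ξ * s - τ * c) ^ 2) ≤ 1 + ε / 2 := by
    refine (ciInf_le ⟨0, ?_⟩ (τ * c / s)).trans ?_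
    · rintro _ ⟨ξ, rfl⟩
      have h0 := deGennes_nonneg (ξ * c + τ * s)
      positivity
    · have e : τ * c / s * s - τ * c = 0 := by field_simp; ring
      rw [e]
      have hMx : M ≤ τ * c / s * c + τ * s := by
        have : M * s ≤ (τ * c / s * c + τ * s) * s := by
          have : (τ * c / s * c + τ * s) * s = τ := by
            field_simp; linear_combination τ * hsc
          nlinarith
        exact le_of_mul_le_mul_right this hs
      have := (hM _ hMx).2
      linarith
  rw [Real.dist_eq, abs_lt]
  constructor <;> linarith
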